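/- For all (b,c) ∈ ℤ_{≥0}², the specialization of Q_{b,c} at x = 1 and y = 1 satisfies Q_{b,c}(1,1,z,w) = (−1)^c · z^{c} · w^{b+2c} · ∏_{j=0}^{b+c−1}(z − q^{4j}) in K[z,w]. -/

import Mathlib

noncomputable section

open MvPolynomial

/-- The field `K = ℚ(q)` of rational functions in `q` over `ℚ`. -/
abbrev K : Type := RatFunc ℚ

/-- The variable `q ∈ K = ℚ(q)`. -/
def q : K := RatFunc.X

/-- The polynomial ring `K[x,y,z,w]`. -/
abbrev P4 : Type := MvPolynomial (Fin 4) K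

def xP : P4 := X 0
def yP : P4 := X 1
def zP : P4 := X 2
def wP : P4 := X 3

/-- The `K`-algebra map `K[x,y,z,w] → K[x,y,z,w]` rescaling the variables:
`x ↦ q^a·x`, `y ↦ q^b·y`, `z ↦ q^c·z`, `w ↦ q^d·w`. -/
def scl (a b c d : ℤ) : P4 →ₐ[K] P4 :=
  aeval ![C (q ^ a) * X 0, C (q ^ b) * X 1, C (q ^ c) * X 2, C (q ^ d) * X 3]

/-- The polynomials `Q_{b,0}(x,y,z,w)`, defined by the recursion (rec1) of the paper. -/
def Qb0 : ℕ → P4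
  | 0 => 1
  | b + 1 =>
      C (q ^ (4 * (b : ℤ))) * wP * yP * (zP - 1) * scl 0 0 (-4) 0 (Qb0 b)
    + C (q ^ (4 * (b : ℤ))) * wP * xP * (yP - 1) * yP * zP * scl 0 (-2) 0 0 (Qb0 b)
    + C (q ^ (6 * (b : ℤ))) * (wP - 1) * (yP - 1) * scl 0 (-2) 0 (-2) (Qb0 b)
    + C (q ^ (4 * (b : ℤ))) * wP * (xP - 1) * yP * (zP - 1) * scl (-4) 2 (-4) 0 (Qb0 b)
    + C (q ^ (6 * (b : ℤ))) * (wP - 1) * (xP - 1) * yP * scl (-4) 0 0 (-2) (Qb0 b)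

/-- The polynomials `Q_{b,c}(x,y,z,w)`: for `c ≥ 1` they are defined by the
recursion (rec2) of the paper, lowering `c`; for `c = 0` by `Qb0`. -/
def Q : ℕ → ℕ → P4
  | b, 0 => Qb0 b
  | b, c + 1 =>
      - (C (q ^ (4 * (b : ℤ) + 8 * (c : ℤ))) * wP ^ 2 * yP * (zP - 1) * zP)
          * scl 0 0 (-4) 0 (Q b c)
    + (C (q ^ (4 * (b : ℤ) + 4 * (c : ℤ) - 2)) * wP * xP * (yP - 1) * zP)
          * (C (q ^ (2 * (b : ℤ) + 4 * (c : ℤ) + 4)) - C (q ^ (2 : ℤ)) * wP * yP * zP)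
          * scl 0 (-2) 0 0 (Q b c)
    - (C (q ^ (6 * (b : ℤ) + 8 * (c : ℤ))) * (wP - 1) * wP * (yP - 1) * zP)
          * scl 0 (-2) 0 (-2) (Q b c)
    + (C (q ^ (4 * (b : ℤ) + 8 * (c : ℤ) - 2)) * wP * (xP - 1) * (zP - 1))
          * (C (q ^ (2 * (b : ℤ) + 4 * (c : ℤ) + 4)) - C (q ^ (2 : ℤ)) * wP * yP * zP)
          * scl (-4) 2 (-4) 0 (Q b c)
    + (C (q ^ (6 * (b : ℤ) + 8 * (c : ℤ) - 2)) * (wP - 1) * (xP - 1))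
          * (C (q ^ (2 * (b : ℤ) + 4 * (c : ℤ) + 4)) - C (q ^ (2 : ℤ)) * wP * yP * zP)
          * scl (-4) 0 0 (-2) (Q b c)

/-! At `x = y = 1` only the first term of each recursion survives, the others having a factor
`x - 1` or `y - 1`. So each step multiplies by an explicit monomial times `z - 1` and replaces `z`
by `q⁻⁴ z`; since `q⁴ (q⁻⁴ z - q^(4j)) = z - q^(4(j+1))`, this shifts the product of the
`z - q^(4j)` by one and `z - 1` supplies the missing factor. -/

theorem prod_range_succ_sub_pow_eq_mul_map {R F : Type*} [CommRing R] [FunLike F R R]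
    [RingHomClass F R R] (σ : F) {t z : R} (ht : σ t = t) (hz : t * σ z = z) (n : ℕ) :
    ∏ j ∈ Finset.range (n + 1), (z - t ^ j) =
      t ^ n * (z - 1) * σ (∏ j ∈ Finset.range n, (z - t ^ j)) := by
  have shift (j : ℕ) : z - t ^ (j + 1) = t * σ (z - t ^ j) := by
    rw [map_sub, map_pow, ht, mul_sub, hz, pow_succ']
  simp only [Finset.prod_range_succ', shift, Finset.prod_mul_distrib, Finset.prod_const,
    Finset.card_range, map_prod, pow_zero]
  ring

theorem q_ne_zero : q ≠ 0 := RatFunc.X_ne_zero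

section Rescaling

variable (a b c d : ℤ)

theorem scl_C (r : K) : scl a b c d (C r) = C r := algHom_C _ r

theorem scl_X_two : scl a b c d (X 2) = C (q ^ c) * X 2 := by simp [scl]

theorem scl_X_three : scl a b c d (X 3) = C (q ^ d) * X 3 := by simp [scl]

end Rescaling

theorem C_q_pow_four_mul_scl_X_two : C (q ^ 4) * scl 0 0 (-4) 0 (X 2) = X 2 := by
  have cancel : q ^ 4 * q ^ (-4 : ℤ) = 1 := by
    rw [zpow_neg]
    exact mul_inv_cancel₀ (pow_ne_zero 4 q_ne_zero)
  rw [scl_X_two, ← mul_assoc, ← C_mul, cancel, C_1, one_mul]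

theorem C_q_pow_mul_scl_X_two_pow (n : ℕ) :
    C (q ^ (4 * n)) * scl 0 0 (-4) 0 (X 2) ^ n = X 2 ^ n := by
  rw [pow_mul, C_pow, ← mul_pow, C_q_pow_four_mul_scl_X_two]

/-- The product `∏_{j < n} (z - q^(4j))`, in base `q⁴` a `q`-shifted factorial in `z`. -/
def zProd (n : ℕ) : P4 := ∏ j ∈ Finset.range n, (X 2 - C (q ^ (4 * j)))

theorem zProd_succ (n : ℕ) :
    zProd (n + 1) = C (q ^ (4 * n)) * (X 2 - 1) * scl 0 0 (-4) 0 (zProd n) := by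
  simpa only [zProd, pow_mul, C_pow] using
    prod_range_succ_sub_pow_eq_mul_map (scl 0 0 (-4) 0) (scl_C 0 0 (-4) 0 (q ^ 4))
      C_q_pow_four_mul_scl_X_two n

/-- The specialization `x = y = 1`, as an endomorphism of `K[x,y,z,w]` with values in `K[z,w]`. -/
def specXY : P4 →ₐ[K] P4 := aeval ![1, 1, X 2, X 3]

theorem specXY_C (r : K) : specXY (C r) = C r := algHom_C _ r

theorem specXY_xP : specXY xP = 1 := by simp [specXY, xP]

theorem specXY_yP : specXY yP = 1 := by simp [specXY, yP]

theorem specXY_zP : specXY zP = X 2 := by simp [specXY, zP]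

theorem specXY_wP : specXY wP = X 3 := by simp [specXY, wP]

theorem specXY_scl (c d : ℤ) (p : P4) :
    specXY (scl 0 0 c d p) = scl 0 0 c d (specXY p) := by
  suffices h : specXY.comp (scl 0 0 c d) = (scl 0 0 c d).comp specXY from DFunLike.congr_fun h p
  ext i : 1
  fin_cases i <;> simp [specXY, scl, algHom_C]

theorem specXY_Qb0_succ (b : ℕ) :
    specXY (Qb0 (b + 1)) =
      C (q ^ (4 * b)) * X 3 * (X 2 - 1) * scl 0 0 (-4) 0 (specXY (Qb0 b)) := by
  have exponent : q ^ (4 * (b : ℤ)) = q ^ (4 * b) := by exact_mod_cast zpow_natCast q (4 * b)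
  simp only [Qb0, map_add, map_mul, map_sub, map_one, specXY_C, specXY_xP, specXY_yP, specXY_zP,
    specXY_wP, specXY_scl, exponent]
  ring

theorem specXY_Q_succ (b c : ℕ) :
    specXY (Q b (c + 1)) =
      -(C (q ^ (4 * b + 8 * c)) * X 3 ^ 2 * (X 2 - 1) * X 2)
        * scl 0 0 (-4) 0 (specXY (Q b c)) := by
  have exponent : q ^ (4 * (b : ℤ) + 8 * (c : ℤ)) = q ^ (4 * b + 8 * c) := by
    exact_mod_cast zpow_natCast q (4 * b + 8 * c)
  simp only [Q, map_add, map_mul, map_sub, map_neg, map_pow specXY, map_one, specXY_C, specXY_xP,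
    specXY_yP, specXY_zP, specXY_wP, specXY_scl, exponent]
  ring

theorem specXY_Qb0 (b : ℕ) : specXY (Qb0 b) = X 3 ^ b * zProd b := by
  induction b with
  | zero => simp [Qb0, zProd]
  | succ b ih =>
    rw [specXY_Qb0_succ, ih, zProd_succ, map_mul, map_pow (scl 0 0 (-4) 0), scl_X_three,
      zpow_zero, C_1, one_mul]
    ring

/-- `Q_{b,c}(1,1,z,w) = (−1)^c z^{c} w^{b+2c} ∏_{j<b+c}(z − q^{4j})`. -/
theorem Q_spec_x1y1 (b c : ℕ) :
    aeval ![(1 : P4), 1, X 2, X 3] (Q b c) =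
      C ((-1 : K) ^ c) * (X 2 : P4) ^ c * (X 3 : P4) ^ (b + 2 * c)
        * (∏ j ∈ Finset.range (b + c), ((X 2 : P4) - C (q ^ (4 * j)))) := by
  change specXY (Q b c) = C ((-1) ^ c) * X 2 ^ c * X 3 ^ (b + 2 * c) * zProd (b + c)
  induction c with
  | zero => simp [Q, specXY_Qb0]
  | succ c ih =>
    calc
      specXY (Q b (c + 1))
      _ = -(C (q ^ (4 * b + 8 * c)) * X 3 ^ 2 * (X 2 - 1) * X 2) *
            (C ((-1) ^ c) * scl 0 0 (-4) 0 (X 2) ^ c * X 3 ^ (b + 2 * c)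
              * scl 0 0 (-4) 0 (zProd (b + c))) := by
        simp only [specXY_Q_succ, ih, map_mul, map_pow (scl 0 0 (-4) 0), scl_C, scl_X_three,
          zpow_zero, C_1, one_mul]
      _ = C ((-1) ^ (c + 1)) * X 2 * (C (q ^ (4 * c)) * scl 0 0 (-4) 0 (X 2) ^ c)
            * X 3 ^ (b + 2 * (c + 1))
            * (C (q ^ (4 * (b + c))) * (X 2 - 1) * scl 0 0 (-4) 0 (zProd (b + c))) := by
        simp only [map_pow C, map_neg, C_1]
        ring
      _ = C ((-1) ^ (c + 1)) * X 2 ^ (c + 1) * X 3 ^ (b + 2 * (c + 1)) * zProd (b + (c + 1)) := by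
        rw [C_q_pow_mul_scl_X_two_pow, ← zProd_succ, ← add_assoc, pow_succ' (X 2),
          ← mul_assoc (C _)]
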